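/- There exist universal constants c, C, C′ > 0 with the following property. Let N ≥ n ≥ 4 be integers, r ≥ √n, and ρ ∈ (0, 1/3), and let θ₁, …, θ_N be independent random vectors uniformly distributed on S^{n−1}. Then for every η ∈ (1+ρ)B₂ⁿ \ (1−2ρ)B₂ⁿ, every t ∈ ℝ and every β > 0, there exists q ≥ 1 − C′(ρ + n/r²) such that P( F(η, t) > β + (1 + c(ρ + (log n)²/n + n/r²)) · (√n/r) · φ(q·t·√n/r) ) ≤ e^{−Cβ²N}. -/

import Mathlib

open MeasureTheory Metric Set
open scoped RealInnerProductSpace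

/-- The uniform (rotation-invariant) probability measure on the unit sphere of `ℝⁿ`. -/
noncomputable def uniformSphere (n : ℕ) :
    Measure (sphere (0 : EuclideanSpace ℝ (Fin n)) 1) :=
  (((volume : Measure (EuclideanSpace ℝ (Fin n))).toSphere) Set.univ)⁻¹ •
    (volume : Measure (EuclideanSpace ℝ (Fin n))).toSphere

/-- `φ(r) = e^{−r²/2}`. -/
noncomputable def gphi (r : ℝ) : ℝ := Real.exp (-r ^ 2 / 2)

/-- `F(η,t) = (1/N) ∑_{k=1}^N φ(r⟨η,θ_k⟩ + t)`. -/
noncomputable def Ffun {n N : ℕ} (r t : ℝ)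
    (θ : Fin N → sphere (0 : EuclideanSpace ℝ (Fin n)) 1)
    (η : EuclideanSpace ℝ (Fin n)) : ℝ :=
  (1 / (N : ℝ)) * ∑ k : Fin N, gphi (r * ⟪η, (θ k : EuclideanSpace ℝ (Fin n))⟫ + t)

/-- The joint law of `N` independent uniform random points on `S^{n-1}`. -/
noncomputable def sphereProduct (n N : ℕ) :
    Measure (Fin N → sphere (0 : EuclideanSpace ℝ (Fin n)) 1) :=
  Measure.pi fun _ => uniformSphere n

theorem polar_lintegral {E : Type*} [NormedAddCommGroup E] [NormedSpace ℝ E] [MeasurableSpace E]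
    [BorelSpace E] [FiniteDimensional ℝ E] [Nontrivial E] (μ : Measure E) [μ.IsAddHaarMeasure]
    (G : E → ENNReal) (hG : Measurable G) :
    ∫⁻ x, G x ∂μ = ∫⁻ θ : sphere (0 : E) 1, ∫⁻ p in Ioi (0 : ℝ),
      ENNReal.ofReal (p ^ (Module.finrank ℝ E - 1)) * G (p • (θ : E)) ∂volume ∂μ.toSphere := by
  calc
    ∫⁻ x, G x ∂μ = ∫⁻ x : ({(0)}ᶜ : Set E), G x.1 ∂(μ.comap (↑)) := by
      rw [lintegral_subtype_comap (measurableSet_singleton _).compl fun x ↦ G x,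
        restrict_compl_singleton]
    _ = ∫⁻ x : sphere (0 : E) 1 × Ioi (0 : ℝ), G (x.2.1 • x.1.1)
          ∂μ.toSphere.prod (.volumeIoiPow (Module.finrank ℝ E - 1)) := by
      have := μ.measurePreserving_homeomorphUnitSphereProd.lintegral_comp_emb
        (Homeomorph.measurableEmbedding _)
        (fun x : sphere (0 : E) 1 × Ioi (0 : ℝ) => G (x.2.1 • x.1.1))
      rw [← this]
      refine lintegral_congr fun x => ?_
      have := congrArg Subtype.val ((homeomorphUnitSphereProd E).symm_apply_apply x)
      rw [homeomorphUnitSphereProd_symm_apply_coe] at this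
      rw [this]
    _ = ∫⁻ θ : sphere (0 : E) 1, ∫⁻ p : Ioi (0 : ℝ), G (p.1 • θ.1)
          ∂.volumeIoiPow (Module.finrank ℝ E - 1) ∂μ.toSphere := by
      rw [lintegral_prod]
      apply Measurable.aemeasurable
      fun_prop
    _ = _ := by
      refine lintegral_congr fun θ => ?_
      rw [Measure.volumeIoiPow, lintegral_withDensity_eq_lintegral_mul _ (by fun_prop) (by fun_prop)]
      simp only [Pi.mul_apply]
      rw [lintegral_subtype_comap measurableSet_Ioi
        (fun a => ENNReal.ofReal (a ^ (Module.finrank ℝ E - 1)) * G (a • θ.1))]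

theorem radial_lintegral {E : Type*} [NormedAddCommGroup E] [NormedSpace ℝ E] [MeasurableSpace E]
    [BorelSpace E] [FiniteDimensional ℝ E] [Nontrivial E] (μ : Measure E) [μ.IsAddHaarMeasure]
    (G : ℝ → ENNReal) (hG : Measurable G) :
    ∫⁻ x, G ‖x‖ ∂μ = μ.toSphere univ * ∫⁻ p in Ioi (0 : ℝ),
      ENNReal.ofReal (p ^ (Module.finrank ℝ E - 1)) * G p := by
  rw [polar_lintegral μ (fun x => G ‖x‖) (by fun_prop)]
  have : ∀ θ : sphere (0 : E) 1, ∫⁻ p in Ioi (0 : ℝ),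
      ENNReal.ofReal (p ^ (Module.finrank ℝ E - 1)) * G ‖p • (θ : E)‖ = ∫⁻ p in Ioi (0 : ℝ),
      ENNReal.ofReal (p ^ (Module.finrank ℝ E - 1)) * G p := by
    intro θ
    refine setLIntegral_congr_fun measurableSet_Ioi fun p hp => ?_
    have hp' : 0 < p := hp
    simp [norm_smul, abs_of_pos hp']
  simp_rw [this, lintegral_const, mul_comm]

theorem slice_lintegral (m : ℕ) (e : EuclideanSpace ℝ (Fin (m + 1))) (he : ‖e‖ = 1)
    (H : ℝ → ℝ → ENNReal) (hH : Measurable (fun p : ℝ × ℝ => H p.1 p.2)) :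
    ∫⁻ x : EuclideanSpace ℝ (Fin (m + 1)), H ⟪e, x⟫ ‖x‖ =
      ∫⁻ x : ℝ, ∫⁻ y : EuclideanSpace ℝ (Fin m), H x (√ (x ^ 2 + ‖y‖ ^ 2)) := by
  obtain ⟨b, hb⟩ := Orthonormal.exists_orthonormalBasis_extension_of_card_eq (𝕜 := ℝ)
    (E := EuclideanSpace ℝ (Fin (m + 1))) (ι := Fin (m + 1)) (by simp) (v := fun _ => e) (s := {0})
    (by
      constructor
      · intro i; simpa using he
      · intro i j hij; exact absurd (Subsingleton.elim i j) hij)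
  have hb0 : b 0 = e := hb 0 rfl
  have h1 := b.measurePreserving_repr.lintegral_comp_emb
    b.repr.toHomeomorph.measurableEmbedding (fun z : EuclideanSpace ℝ (Fin (m + 1)) => H (z 0) ‖z‖)
  simp only [LinearIsometryEquiv.norm_map, b.repr_apply_apply, hb0] at h1
  rw [h1]
  have h2 := (PiLp.volume_preserving_toLp (Fin (m + 1))).lintegral_comp_emb
    (MeasurableEquiv.toLp 2 _).measurableEmbedding
    (fun z : EuclideanSpace ℝ (Fin (m + 1)) => H (z 0) ‖z‖)
  rw [← h2]
  have h3 := ((volume_preserving_piFinSuccAbove (fun _ : Fin (m + 1) => ℝ) 0)).symm.lintegral_comp_emb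
    (MeasurableEquiv.measurableEmbedding _)
    (fun z : Fin (m + 1) → ℝ => H ((WithLp.toLp 2 z : EuclideanSpace ℝ (Fin (m + 1))) 0)
      ‖(WithLp.toLp 2 z : EuclideanSpace ℝ (Fin (m + 1)))‖)
  rw [← h3]
  have h4 : ∀ p : ℝ × (Fin m → ℝ), H ((WithLp.toLp 2 ((MeasurableEquiv.piFinSuccAbove (fun _ : Fin (m + 1) => ℝ) 0).symm p) : EuclideanSpace ℝ (Fin (m + 1))) 0)
      ‖(WithLp.toLp 2 ((MeasurableEquiv.piFinSuccAbove (fun _ : Fin (m + 1) => ℝ) 0).symm p) : EuclideanSpace ℝ (Fin (m + 1)))‖ = H p.1 (√ (p.1 ^ 2 + ‖(WithLp.toLp 2 p.2 : EuclideanSpace ℝ (Fin m))‖ ^ 2)) := by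
    intro p
    have : ∀ q : Fin (m + 1) → ℝ, ‖(WithLp.toLp 2 q : EuclideanSpace ℝ (Fin (m + 1)))‖ = √ (q 0 ^ 2 + ‖(WithLp.toLp 2 (fun i : Fin m => q i.succ) : EuclideanSpace ℝ (Fin m))‖ ^ 2) := by
      intro q
      rw [EuclideanSpace.norm_sq_eq, EuclideanSpace.norm_eq, Fin.sum_univ_succ]
      simp
    rw [this]
    simp [MeasurableEquiv.piFinSuccAbove, Fin.insertNthEquiv]
  simp_rw [h4]
  rw [Measure.volume_eq_prod, lintegral_prod _ (by
    apply Measurable.aemeasurable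
    exact hH.comp (f := fun p : ℝ × (Fin m → ℝ) => (p.1, (√ (p.1 ^ 2 + ‖(WithLp.toLp 2 p.2 : EuclideanSpace ℝ (Fin m))‖ ^ 2)))) (by fun_prop))]
  refine lintegral_congr fun x => ?_
  exact (PiLp.volume_preserving_toLp (Fin m)).lintegral_comp_emb
    (MeasurableEquiv.toLp 2 _).measurableEmbedding
    (fun z : EuclideanSpace ℝ (Fin m) => H x (√ (x ^ 2 + ‖z‖ ^ 2)))


theorem marginal_lintegral (m : ℕ) (hm : 1 ≤ m) (e : EuclideanSpace ℝ (Fin (m + 1))) (he : ‖e‖ = 1)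
    (g : ℝ → ENNReal) (hg : Measurable g) :
    ∫⁻ θ : sphere (0 : EuclideanSpace ℝ (Fin (m + 1))) 1, g ⟪e, (θ : EuclideanSpace ℝ (Fin (m + 1)))⟫
        ∂(volume : Measure (EuclideanSpace ℝ (Fin (m + 1)))).toSphere =
      (volume : Measure (EuclideanSpace ℝ (Fin m))).toSphere univ *
        ∫⁻ α in Ioo 0 Real.pi, ENNReal.ofReal (Real.sin α ^ (m - 1)) * g (Real.cos α) := by
  set w : ℝ → ENNReal := (Iio (1 : ℝ)).indicator 1 with hw
  have hwm : Measurable w := measurable_one.indicator measurableSet_Iio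
  set W : ENNReal := ∫⁻ p in Ioi (0 : ℝ), ENNReal.ofReal (p ^ m) * w p with hW
  have : Nonempty (Fin m) := ⟨⟨0, hm⟩⟩
  have hWval : W = ∫⁻ p in Ioo (0 : ℝ) 1, ENNReal.ofReal (p ^ m) := by
    rw [hW, ← Iio_inter_Ioi, ← setLIntegral_indicator measurableSet_Iio]
    refine lintegral_congr fun p => ?_
    by_cases hp : p < 1 <;> simp [w, hp]
  have hW0 : W ≠ 0 := by
    rw [hWval]
    intro h
    rw [lintegral_eq_zero_iff (by fun_prop)] at h
    have h2 := (ae_restrict_iff' measurableSet_Ioo).1 h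
    have h3 : ∀ᵐ x : ℝ, x ∉ Ioo (0 : ℝ) 1 := by
      filter_upwards [h2] with x hx hx'
      have := hx hx'
      simp at this
      exact absurd this (not_le.2 (pow_pos hx'.1 m))
    have h4 : volume (Ioo (0 : ℝ) 1) = 0 := by
      have h5 := h3
      rw [ae_iff] at h5
      simpa only [not_not, ofPred_mem_eq] using h5
    simp at h4
  have hWtop : W ≠ ⊤ := by
    rw [hWval]
    refine ne_of_lt (lt_of_le_of_lt (setLIntegral_mono (g := fun _ => 1) measurable_const
      (fun x hx => ?_)) ?_)
    · rw [ENNReal.ofReal_le_one]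
      exact pow_le_one₀ hx.1.le hx.2.le
    · simp
  rw [← ENNReal.mul_left_inj hW0 hWtop]
  have hHm : Measurable (fun p : ℝ × ℝ => g (p.1 / p.2) * w p.2) := by fun_prop
  have e1 : (∫⁻ θ : sphere (0 : EuclideanSpace ℝ (Fin (m + 1))) 1, g ⟪e, (θ : EuclideanSpace ℝ (Fin (m + 1)))⟫
        ∂(volume : Measure (EuclideanSpace ℝ (Fin (m + 1)))).toSphere) * W =
      ∫⁻ x : EuclideanSpace ℝ (Fin (m + 1)), g (⟪e, x⟫ / ‖x‖) * w ‖x‖ := by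
    rw [polar_lintegral volume _ (by
      exact hHm.comp (f := fun x : EuclideanSpace ℝ (Fin (m + 1)) => (⟪e, x⟫, ‖x‖)) (by fun_prop)),
      ← lintegral_mul_const _ (by fun_prop)]
    refine lintegral_congr fun θ => ?_
    rw [hW, ← lintegral_const_mul _ (by fun_prop)]
    refine setLIntegral_congr_fun measurableSet_Ioi fun p hp => ?_
    have hp' : 0 < p := hp
    have hn : ‖p • (θ : EuclideanSpace ℝ (Fin (m + 1)))‖ = p := by
      simp [norm_smul, abs_of_pos hp']
    simp only [hn, inner_smul_right, finrank_euclideanSpace, Fintype.card_fin, Nat.add_sub_cancel]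
    rw [mul_div_cancel_left₀ _ hp'.ne']
    ring
  have e2 := slice_lintegral m e he (fun a b => g (a / b) * w b) hHm
  have e3 : ∀ x : ℝ, ∫⁻ y : EuclideanSpace ℝ (Fin m),
      g (x / √ (x ^ 2 + ‖y‖ ^ 2)) * w (√ (x ^ 2 + ‖y‖ ^ 2)) =
      (volume : Measure (EuclideanSpace ℝ (Fin m))).toSphere univ * ∫⁻ p in Ioi (0 : ℝ),
      ENNReal.ofReal (p ^ (m - 1)) * (g (x / √ (x ^ 2 + p ^ 2)) * w (√ (x ^ 2 + p ^ 2))) := by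
    intro x
    have := radial_lintegral (volume : Measure (EuclideanSpace ℝ (Fin m)))
      (fun p => g (x / √ (x ^ 2 + p ^ 2)) * w (√ (x ^ 2 + p ^ 2))) (by fun_prop)
    simpa using this
  set P : ℝ × ℝ → ENNReal := fun q => (Ioi (0 : ℝ)).indicator (fun p => ENNReal.ofReal (p ^ (m - 1))) q.2 *
    (g (q.1 / √ (q.1 ^ 2 + q.2 ^ 2)) * w (√ (q.1 ^ 2 + q.2 ^ 2))) with hP
  have hind : Measurable ((Ioi (0 : ℝ)).indicator (fun p : ℝ => ENNReal.ofReal (p ^ (m - 1)))) :=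
    Measurable.indicator (by fun_prop) measurableSet_Ioi
  have hPm : Measurable P := by fun_prop
  have e4 : ∀ x : ℝ, ∫⁻ p in Ioi (0 : ℝ),
      ENNReal.ofReal (p ^ (m - 1)) * (g (x / √ (x ^ 2 + p ^ 2)) * w (√ (x ^ 2 + p ^ 2))) =
      ∫⁻ p : ℝ, P (x, p) := by
    intro x
    rw [← lintegral_indicator measurableSet_Ioi]
    refine lintegral_congr fun p => ?_
    by_cases hp : 0 < p <;> simp [P, hp]
  have e5 : ∫⁻ x : ℝ, ∫⁻ p : ℝ, P (x, p) = ∫⁻ q : ℝ × ℝ, P q := by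
    rw [Measure.volume_eq_prod, lintegral_prod _ hPm.aemeasurable]
  have e6 : ∫⁻ q : ℝ × ℝ, P q = ∫⁻ q in Ioi (0 : ℝ) ×ˢ Ioo (-Real.pi) Real.pi,
      (ENNReal.ofReal (q.1 ^ m) * w q.1) * ((Ioo 0 Real.pi).indicator
        (fun α => ENNReal.ofReal (Real.sin α ^ (m - 1)) * g (Real.cos α)) q.2) := by
    rw [← lintegral_comp_polarCoord_symm]
    refine setLIntegral_congr_fun (measurableSet_Ioi.prod measurableSet_Ioo) fun q hq => ?_
    obtain ⟨hq1, hq2⟩ := hq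
    have hq1' : 0 < q.1 := hq1
    have hs : √ ((q.1 * Real.cos q.2) ^ 2 + (q.1 * Real.sin q.2) ^ 2) = q.1 := by
      rw [mul_pow, mul_pow, ← mul_add, Real.cos_sq_add_sin_sq, mul_one, Real.sqrt_sq hq1'.le]
    simp only [P, polarCoord_symm_apply, hs, smul_eq_mul]
    rw [mul_div_cancel_left₀ _ hq1'.ne']
    by_cases h0 : 0 < q.2
    · have hsin : 0 < Real.sin q.2 := Real.sin_pos_of_pos_of_lt_pi h0 hq2.2
      rw [indicator_of_mem (show q.1 * Real.sin q.2 ∈ Ioi 0 from mul_pos hq1' hsin),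
        indicator_of_mem (show q.2 ∈ Ioo 0 Real.pi from ⟨h0, hq2.2⟩)]
      have : ENNReal.ofReal q.1 * ENNReal.ofReal ((q.1 * Real.sin q.2) ^ (m - 1)) =
          ENNReal.ofReal (q.1 ^ m) * ENNReal.ofReal (Real.sin q.2 ^ (m - 1)) := by
        rw [← ENNReal.ofReal_mul hq1'.le, ← ENNReal.ofReal_mul (by positivity)]
        congr 1
        obtain ⟨k, rfl⟩ := Nat.exists_eq_add_of_le' hm
        simp only [Nat.add_sub_cancel]
        ring
      rw [← mul_assoc, this]
      ring
    · have hsin : Real.sin q.2 ≤ 0 := Real.sin_nonpos_of_nonpos_of_neg_pi_le (not_lt.1 h0) hq2.1.le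
      rw [indicator_of_notMem (fun h : q.1 * Real.sin q.2 ∈ Ioi 0 =>
          absurd h (not_lt.2 (mul_nonpos_of_nonneg_of_nonpos hq1'.le hsin))),
        indicator_of_notMem (fun h : q.2 ∈ Ioo 0 Real.pi => h0 h.1)]
      simp
  have hindα : Measurable ((Ioo 0 Real.pi).indicator
        (fun α => ENNReal.ofReal (Real.sin α ^ (m - 1)) * g (Real.cos α))) :=
    Measurable.indicator (by fun_prop) measurableSet_Ioo
  rw [e1, e2]
  simp_rw [e3, e4]
  rw [lintegral_const_mul _ (by
    exact Measurable.lintegral_prod_right' (f := P) hPm), e5, e6, Measure.volume_eq_prod,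
    ← Measure.prod_restrict, lintegral_prod_mul (f := fun a => ENNReal.ofReal (a ^ m) * w a)
      (by fun_prop) hindα.aemeasurable, setLIntegral_indicator measurableSet_Ioo]
  have : Ioo 0 Real.pi ∩ Ioo (-Real.pi) Real.pi = Ioo 0 Real.pi := by
    apply inter_eq_left.2
    exact Ioo_subset_Ioo_left (by linarith [Real.pi_pos])
  rw [this, mul_assoc, mul_comm W]

theorem sin_pow_bound (m : ℕ) (hm : 3 ≤ m) (y : ℝ) (hy : y ∈ Ioo 0 Real.pi) :
    Real.sin y ^ (m - 2) ≤ Real.exp (9 / (4 * (m - 2 : ℝ))) *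
      Real.exp (-(m + 1 : ℝ) * Real.cos y ^ 2 / 2) := by
  obtain ⟨k, rfl⟩ := Nat.exists_eq_add_of_le hm
  have hk : 3 + k - 2 = k + 1 := by omega
  rw [hk]
  have hs : 0 < Real.sin y := Real.sin_pos_of_pos_of_lt_pi hy.1 hy.2
  have hsq : Real.sin y ^ 2 = 1 - Real.cos y ^ 2 := by
    have := Real.sin_sq_add_cos_sq y; linarith
  set z := Real.cos y ^ 2 with hz
  have hz0 : 0 ≤ z := sq_nonneg _
  have hz1 : z < 1 := by have := pow_pos hs 2; linarith
  have h1 : 1 - z ≤ Real.exp (-z - z ^ 2 / 2) := by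
    have h := Real.hasSum_pow_div_log_of_abs_lt_one (x := z) (by rw [abs_of_nonneg hz0]; exact hz1)
    have h2 := h.summable.sum_le_tsum (Finset.range 2) (fun i _ => by positivity)
    rw [h.tsum_eq] at h2
    norm_num [Finset.sum_range_succ] at h2
    rw [← Real.log_le_iff_le_exp (by linarith)]
    linarith
  rw [← Real.exp_add]
  have hpos : (0 : ℝ) < k + 1 := by positivity
  refine le_of_sq_le_sq ?_ (Real.exp_pos _).le
  calc (Real.sin y ^ (k + 1)) ^ 2 = (1 - z) ^ (k + 1) := by
        rw [← hsq]; ring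
    _ ≤ Real.exp (-z - z ^ 2 / 2) ^ (k + 1) := by
        apply pow_le_pow_left₀ (by linarith) h1
    _ = Real.exp ((k + 1 : ℝ) * (-z - z ^ 2 / 2)) := by
        rw [← Real.exp_nat_mul]; push_cast; rfl
    _ ≤ Real.exp (2 * (9 / (4 * (((3 + k : ℕ) : ℝ) - 2)) + -(((3 + k : ℕ) : ℝ) + 1) * z / 2)) := by
        apply Real.exp_le_exp.2
        push_cast
        have e : (3 + (k : ℝ) - 2) = k + 1 := by ring
        rw [e]
        have h3 : 9 / (4 * ((k : ℝ) + 1)) * (k + 1) = 9 / 4 := by field_simp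
        set A := 9 / (4 * ((k : ℝ) + 1))
        have : 0 ≤ (k + 1) * (2 * A - 3 * z + (k + 1) * z ^ 2 / 2) := by
          nlinarith [sq_nonneg ((k + 1) * z - 3)]
        have := nonneg_of_mul_nonneg_right this hpos
        nlinarith
    _ = _ := by rw [← Real.exp_nat_mul]; norm_num

theorem angle_bound (m : ℕ) (hm : 3 ≤ m) (g : ℝ → ENNReal) (hg : Measurable g) :
    ∫⁻ α in Ioo 0 Real.pi, ENNReal.ofReal (Real.sin α ^ (m - 1)) * g (Real.cos α) ≤
      ENNReal.ofReal (Real.exp (9 / (4 * (m - 2 : ℝ)))) *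
        ∫⁻ u : ℝ, ENNReal.ofReal (Real.exp (-(m + 1 : ℝ) * u ^ 2 / 2)) * g u := by
  have hc := lintegral_image_eq_lintegral_abs_deriv_mul (s := Ioo 0 Real.pi) (f := Real.cos)
    (f' := fun x => - Real.sin x) measurableSet_Ioo
    (fun x _ => (Real.hasDerivAt_cos x).hasDerivWithinAt)
    (Real.injOn_cos.mono Ioo_subset_Icc_self)
    (fun u => ENNReal.ofReal (Real.exp (9 / (4 * (m - 2 : ℝ)))) *
      (ENNReal.ofReal (Real.exp (-(m + 1 : ℝ) * u ^ 2 / 2)) * g u))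
  rw [← lintegral_const_mul _ (by fun_prop)]
  refine le_trans ?_ (setLIntegral_le_lintegral (Real.cos '' Ioo 0 Real.pi) _)
  rw [hc]
  refine setLIntegral_mono' measurableSet_Ioo fun y hy => ?_
  have hs : 0 < Real.sin y := Real.sin_pos_of_pos_of_lt_pi hy.1 hy.2
  rw [← mul_assoc, ← mul_assoc, abs_neg, abs_of_pos hs, ← ENNReal.ofReal_mul hs.le,
    ← ENNReal.ofReal_mul (by positivity)]
  gcongr
  have := sin_pow_bound m hm y hy
  calc Real.sin y ^ (m - 1) = Real.sin y * Real.sin y ^ (m - 2) := by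
        rw [← pow_succ']; congr 1; omega
    _ ≤ _ := by rw [mul_assoc]; gcongr

theorem gauss_lintegral (n b t : ℝ) (hn : 0 < n) :
    ∫⁻ u : ℝ, ENNReal.ofReal (Real.exp (-n * u ^ 2 / 2)) *
      ENNReal.ofReal (Real.exp (-(b * u + t) ^ 2 / 2)) =
    ENNReal.ofReal (Real.exp (-(t ^ 2 * n / (n + b ^ 2)) / 2) * √ (2 * Real.pi / (n + b ^ 2))) := by
  have hd : 0 < n + b ^ 2 := by positivity
  have h : ∀ u : ℝ, ENNReal.ofReal (Real.exp (-n * u ^ 2 / 2)) *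
      ENNReal.ofReal (Real.exp (-(b * u + t) ^ 2 / 2)) =
      ENNReal.ofReal (Real.exp (-(t ^ 2 * n / (n + b ^ 2)) / 2)) *
      ENNReal.ofReal (Real.exp (-((n + b ^ 2) / 2) * (u + b * t / (n + b ^ 2)) ^ 2)) := by
    intro u
    rw [← ENNReal.ofReal_mul (Real.exp_pos _).le, ← ENNReal.ofReal_mul (Real.exp_pos _).le,
      ← Real.exp_add, ← Real.exp_add]
    congr 2
    field_simp
    ring
  simp_rw [h]
  rw [lintegral_const_mul _ (by fun_prop), ENNReal.ofReal_mul (Real.exp_pos _).le,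
    lintegral_add_right_eq_self (fun u => ENNReal.ofReal (Real.exp (-((n + b ^ 2) / 2) * u ^ 2)))]
  rw [← ofReal_integral_eq_lintegral_ofReal (integrable_exp_neg_mul_sq (by positivity))
    (Filter.Eventually.of_forall fun _ => (Real.exp_pos _).le), integral_gaussian]
  congr 3
  field_simp

theorem gamma_half (x : ℝ) (hx : 0 < x) : Real.Gamma (x + 1 / 2) ≤ √ x * Real.Gamma x := by
  have h := Real.Gamma_mul_add_mul_le_rpow_Gamma_mul_rpow_Gamma hx (show 0 < x + 1 by linarith)
    (show (0 : ℝ) < 1 / 2 by norm_num) (show (0 : ℝ) < 1 / 2 by norm_num) (by norm_num)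
  have hG := Real.Gamma_pos_of_pos hx
  rw [Real.Gamma_add_one hx.ne', ← Real.sqrt_eq_rpow, ← Real.sqrt_eq_rpow,
    Real.sqrt_mul hx.le] at h
  have e : 1 / 2 * x + 1 / 2 * (x + 1) = x + 1 / 2 := by ring
  rw [e] at h
  have := Real.mul_self_sqrt hG.le
  calc _ ≤ _ := h
    _ = √ x * (√ (Real.Gamma x) * √ (Real.Gamma x)) := by ring
    _ = _ := by rw [this]

theorem sphere_area (m : ℕ) (hm : 1 ≤ m) :
    (volume : Measure (EuclideanSpace ℝ (Fin m))).toSphere univ =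
      ENNReal.ofReal (2 * √ Real.pi ^ m / Real.Gamma (m / 2)) := by
  have : Nonempty (Fin m) := ⟨⟨0, hm⟩⟩
  have hm' : (0 : ℝ) < m := by exact_mod_cast hm
  have hG := Real.Gamma_pos_of_pos (half_pos hm')
  rw [Measure.toSphere_apply_univ, EuclideanSpace.volume_ball]
  simp only [finrank_euclideanSpace, Fintype.card_fin, ENNReal.ofReal_one, one_pow, one_mul]
  rw [← ENNReal.ofReal_natCast, ← ENNReal.ofReal_mul hm'.le, Real.Gamma_add_one (by positivity)]
  congr 1
  field_simp

theorem sphere_area_ratio (m : ℕ) (hm : 1 ≤ m) :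
    (volume : Measure (EuclideanSpace ℝ (Fin m))).toSphere univ ≤
      ENNReal.ofReal (√ ((m + 1) / (2 * Real.pi))) *
      (volume : Measure (EuclideanSpace ℝ (Fin (m + 1)))).toSphere univ := by
  have hm' : (0 : ℝ) < m := by exact_mod_cast hm
  rw [sphere_area m hm, sphere_area (m + 1) (by omega), ← ENNReal.ofReal_mul (by positivity)]
  apply ENNReal.ofReal_le_ofReal
  have hG := Real.Gamma_pos_of_pos (half_pos hm')
  have h := gamma_half (m / 2) (half_pos hm')
  have e : ((m : ℝ) / 2 + 1 / 2) = ((m + 1 : ℕ) : ℝ) / 2 := by push_cast; ring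
  rw [e] at h
  have hG2 : 0 < Real.Gamma (((m + 1 : ℕ) : ℝ) / 2) := Real.Gamma_pos_of_pos (by positivity)
  have hpi : 0 < √ Real.pi := Real.sqrt_pos.2 Real.pi_pos
  have h2 : √ ((m + 1) / (2 * Real.pi)) * √ Real.pi = √ (((m : ℝ) + 1) / 2) := by
    rw [← Real.sqrt_mul (by positivity)]
    congr 1
    field_simp
  have h3 : √ ((m : ℝ) / 2) ≤ √ (((m : ℝ) + 1) / 2) := Real.sqrt_le_sqrt (by linarith)
  rw [← mul_div_assoc, div_le_div_iff₀ hG hG2]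
  calc _ ≤ 2 * √ Real.pi ^ m * (√ (((m : ℝ) + 1) / 2) * Real.Gamma (m / 2)) := by
        gcongr
        exact h.trans (by gcongr)
    _ = _ := by rw [← h2]; ring

theorem uniformSphere_isProb (m : ℕ) : IsProbabilityMeasure (uniformSphere (m + 1)) := by
  constructor
  rw [uniformSphere, Measure.smul_apply, smul_eq_mul]
  refine ENNReal.inv_mul_cancel ?_ (measure_ne_top _ _)
  rw [Measure.measure_univ_ne_zero]
  exact Measure.toSphere_ne_zero _

theorem expectation_bound (m : ℕ) (hm : 3 ≤ m) (η : EuclideanSpace ℝ (Fin (m + 1))) (hη : 0 < ‖η‖)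
    (r t : ℝ) :
    ∫ θ : sphere (0 : EuclideanSpace ℝ (Fin (m + 1))) 1,
      gphi (r * ⟪η, (θ : EuclideanSpace ℝ (Fin (m + 1)))⟫ + t) ∂(uniformSphere (m + 1)) ≤
    √ ((m + 1) / (2 * Real.pi)) * (Real.exp (9 / (4 * (m - 2 : ℝ))) *
      (Real.exp (-(t ^ 2 * (m + 1) / ((m + 1) + (r * ‖η‖) ^ 2)) / 2) *
        √ (2 * Real.pi / ((m + 1) + (r * ‖η‖) ^ 2)))) := by
  set e : EuclideanSpace ℝ (Fin (m + 1)) := ‖η‖⁻¹ • η with he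
  have hen : ‖e‖ = 1 := by simp [he, norm_smul, hη.ne']
  have hηe : η = ‖η‖ • e := by simp [he, smul_smul, hη.ne']
  set b := r * ‖η‖ with hb
  have hin : ∀ θ : EuclideanSpace ℝ (Fin (m + 1)), r * ⟪η, θ⟫ = b * ⟪e, θ⟫ := by
    intro θ
    conv_lhs => rw [hηe]
    rw [real_inner_smul_left]
    ring
  simp_rw [hin]
  have hgm : Continuous gphi := by unfold gphi; fun_prop
  have hgm' : Measurable gphi := hgm.measurable
  rw [integral_eq_lintegral_of_nonneg_ae
    (Filter.Eventually.of_forall fun θ => show 0 ≤ gphi _ from (Real.exp_pos _).le) (by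
      apply Continuous.aestronglyMeasurable; fun_prop)]
  refine ENNReal.toReal_le_of_le_ofReal (by positivity) ?_
  rw [uniformSphere, lintegral_smul_measure,
    marginal_lintegral m (by omega) e hen (fun u => ENNReal.ofReal (gphi (b * u + t))) (by fun_prop)]
  have h1 := angle_bound m hm (fun u => ENNReal.ofReal (gphi (b * u + t))) (by fun_prop)
  have h2 := gauss_lintegral (m + 1) b t (by positivity)
  unfold gphi at h1 ⊢
  rw [h2, ← ENNReal.ofReal_mul (Real.exp_pos _).le] at h1
  have h3 := sphere_area_ratio m (by omega)
  set A := (volume : Measure (EuclideanSpace ℝ (Fin (m + 1)))).toSphere univ with hA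
  have hA0 : A ≠ 0 := by
    rw [hA, Measure.measure_univ_ne_zero]
    exact Measure.toSphere_ne_zero _
  have hAt : A ≠ ⊤ := measure_ne_top _ _
  rw [ENNReal.ofReal_mul (Real.sqrt_nonneg _), smul_eq_mul]
  refine (mul_le_mul_right (mul_le_mul' h3 h1) A⁻¹).trans (le_of_eq ?_)
  rw [mul_comm (ENNReal.ofReal _) A, mul_assoc A, ← mul_assoc, ENNReal.inv_mul_cancel hA0 hAt, one_mul]

theorem hoeffding_sphere (m N : ℕ) (hN : 0 < N) (f : sphere (0 : EuclideanSpace ℝ (Fin (m + 1))) 1 → ℝ)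
    (hf : Measurable f) (h01 : ∀ x, f x ∈ Icc (0 : ℝ) 1) (M β : ℝ) (hβ : 0 < β)
    (hM : ∫ x, f x ∂(uniformSphere (m + 1)) ≤ M) :
    sphereProduct (m + 1) N {θ | (1 / (N : ℝ)) * ∑ k : Fin N, f (θ k) > β + M} ≤
      ENNReal.ofReal (Real.exp (-(2 * β ^ 2 * N))) := by
  have := uniformSphere_isProb m
  unfold sphereProduct
  set μ := uniformSphere (m + 1)
  have hN' : (0 : ℝ) < N := by exact_mod_cast hN
  set I := ∫ x, f x ∂μ with hI
  have hind := ProbabilityTheory.iIndepFun_pi (μ := fun _ : Fin N => μ)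
    (X := fun (_ : Fin N) x => f x - I) (fun _ => (hf.sub_const _).aemeasurable)
  have hsub : ∀ i ∈ (Finset.univ : Finset (Fin N)), ProbabilityTheory.HasSubgaussianMGF
      (fun ω : Fin N → sphere (0 : EuclideanSpace ℝ (Fin (m + 1))) 1 => f (ω i) - I)
      ((‖(1 : ℝ) - 0‖₊ / 2) ^ 2) (Measure.pi fun _ : Fin N => μ) := by
    intro i _
    have h := ProbabilityTheory.hasSubgaussianMGF_of_mem_Icc
      (μ := Measure.pi fun _ : Fin N => μ)
      (X := fun ω : Fin N → sphere (0 : EuclideanSpace ℝ (Fin (m + 1))) 1 => f (ω i))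
      (a := 0) (b := 1) ((hf.comp (measurable_pi_apply i)).aemeasurable) (Filter.Eventually.of_forall fun ω => h01 (ω i))
    have hmean : ∫ ω, f (ω i) ∂(Measure.pi fun _ : Fin N => μ) = I := by
      have := (measurePreserving_eval (fun _ : Fin N => μ) i)
      have h2 := integral_map (μ := Measure.pi fun _ : Fin N => μ) this.measurable.aemeasurable
        (f := f) hf.aestronglyMeasurable
      rw [this.map_eq] at h2
      exact h2.symm
    rwa [hmean] at h
  have key := ProbabilityTheory.HasSubgaussianMGF.measure_sum_ge_le_of_iIndepFun hind
    (s := Finset.univ) hsub (ε := N * β) (by positivity)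
  rw [← ofReal_measureReal]
  apply ENNReal.ofReal_le_ofReal
  calc _ ≤ _ := measureReal_mono (fun θ hθ => ?_)
    _ ≤ _ := key
    _ = _ := ?_
  · simp only [mem_ofPred_eq] at hθ ⊢
    rw [Finset.sum_sub_distrib]
    simp only [Finset.sum_const, Finset.card_univ, Fintype.card_fin, nsmul_eq_mul]
    rw [gt_iff_lt, one_div, inv_mul_eq_div, lt_div_iff₀ hN'] at hθ
    nlinarith
  · congr 1
    simp
    field_simp

theorem K_bound (m : ℕ) (hm : 3 ≤ m) : Real.exp (9 / (4 * (m - 2 : ℝ))) ≤ 1 + 189 / (m + 1 : ℝ) := by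
  have hm' : (3 : ℝ) ≤ m := by exact_mod_cast hm
  set x := 9 / (4 * (m - 2 : ℝ)) with hx
  have hx0 : 0 ≤ x := by apply div_nonneg <;> linarith
  have hx1 : x ≤ 9 / (m + 1 : ℝ) := by
    apply div_le_div_of_nonneg_left <;> linarith
  have hx2 : x ≤ 3 := by
    rw [hx, div_le_iff₀ (by linarith)]; linarith
  have h1 : Real.exp x ≤ 21 := by
    calc Real.exp x ≤ Real.exp 3 := Real.exp_le_exp.2 hx2
      _ = Real.exp 1 ^ 3 := by rw [← Real.exp_nat_mul]; norm_num
      _ ≤ 2.72 ^ 3 := by gcongr; linarith [Real.exp_one_lt_d9]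
      _ ≤ 21 := by norm_num
  have h2 := Real.add_one_le_exp (-x)
  have h3 : Real.exp x * Real.exp (-x) = 1 := by rw [← Real.exp_add]; simp
  have h4 : Real.exp x ≤ 1 + x * Real.exp x := by
    nlinarith [Real.exp_pos x]
  calc Real.exp x ≤ 1 + x * Real.exp x := h4
    _ ≤ 1 + 9 / (m + 1 : ℝ) * 21 := by gcongr
    _ = _ := by ring

set_option maxHeartbeats 1000000 in
/-- pointwise concentration bound for `F(η,t)` (Lemma 3.3 of the paper). -/
theorem Ffun_pointwise_tail_bound :
    ∃ c C C' : ℝ, 0 < c ∧ 0 < C ∧ 0 < C' ∧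
      ∀ n N : ℕ, 4 ≤ n → n ≤ N → ∀ r : ℝ, Real.sqrt n ≤ r →
        ∀ ρ : ℝ, ρ ∈ Set.Ioo (0 : ℝ) (1 / 3) →
          ∀ η : EuclideanSpace ℝ (Fin n), ‖η‖ ≤ 1 + ρ → 1 - 2 * ρ < ‖η‖ →
            ∀ t β : ℝ, 0 < β →
              ∃ q : ℝ, 1 - C' * (ρ + n / r ^ 2) ≤ q ∧
                sphereProduct n N
                    {θ | Ffun r t θ η >
                      β + (1 + c * (ρ + (Real.log n) ^ 2 / n + n / r ^ 2)) *
                        (Real.sqrt n / r) * gphi (q * t * Real.sqrt n / r)} ≤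
                  ENNReal.ofReal (Real.exp (-(C * β ^ 2 * N))) := by
  refine ⟨567, 2, 2, by norm_num, by norm_num, by norm_num, ?_⟩
  intro n N hn hN r hr ρ hρ η hη1 hη2 t β hβ
  obtain ⟨m, rfl⟩ : ∃ m, n = m + 1 := ⟨n - 1, by omega⟩
  have hm : 3 ≤ m := by omega
  have hm' : (3 : ℝ) ≤ m := by exact_mod_cast hm
  obtain ⟨hρ0, hρ1⟩ := hρ
  have hs : 0 < ‖η‖ := by linarith
  have hexp := expectation_bound m hm η hs r t
  have hcast : ((m + 1 : ℕ) : ℝ) = m + 1 := by push_cast; rfl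
  simp only [hcast] at hr ⊢
  set n : ℝ := m + 1 with hn'
  set s := ‖η‖ with hs'
  have hn0 : 0 < n := by linarith
  have hr0 : 0 < r := lt_of_lt_of_le (Real.sqrt_pos.2 hn0) hr
  set a := n / r ^ 2 with ha
  have ha0 : 0 < a := by positivity
  set d := s ^ 2 + a with hd
  have hd0 : 0 < d := by positivity
  have hdn : n + (r * s) ^ 2 = r ^ 2 * d := by
    rw [hd, ha]; field_simp; ring
  have hsd : 0 < √ d := Real.sqrt_pos.2 hd0
  have hsdq : √ d ^ 2 = d := Real.sq_sqrt hd0.le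
  refine ⟨1 / √ d, ?_, ?_⟩
  · rw [le_div_iff₀ hsd]
    have hd1 : d ≤ 1 + 4 * (ρ + a) := by
      rw [hd]; nlinarith
    set y := ρ + a
    have hy : 0 < y := by positivity
    by_cases h : 1 - 2 * y ≤ 0
    · nlinarith
    · have h1 : √ d ≤ 1 + 2 * y := by
        rw [Real.sqrt_le_left (by positivity)]; nlinarith
      nlinarith
  · refine hoeffding_sphere m N (by omega) (fun θ => gphi (r * ⟪η, (θ : EuclideanSpace ℝ (Fin (m + 1)))⟫ + t))
      ?_ ?_ _ β hβ ?_
    · apply Continuous.measurable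
      unfold gphi
      fun_prop
    · intro x
      refine ⟨(Real.exp_pos _).le, Real.exp_le_one_iff.2 ?_⟩
      have := sq_nonneg (r * ⟪η, (x : EuclideanSpace ℝ (Fin (m + 1)))⟫ + t)
      linarith
    · refine hexp.trans ?_
      have hg : Real.exp (-(t ^ 2 * n / (n + (r * s) ^ 2)) / 2) = gphi (1 / √ d * t * √ n / r) := by
        unfold gphi
        congr 2
        rw [hdn, div_pow, mul_pow, mul_pow, div_pow, hsdq, Real.sq_sqrt hn0.le]
        field_simp
      have hsq : √ (n / (2 * Real.pi)) * √ (2 * Real.pi / (n + (r * s) ^ 2)) = √ n / r * (1 / √ d) := by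
        rw [← Real.sqrt_mul (by positivity), hdn]
        have : n / (2 * Real.pi) * (2 * Real.pi / (r ^ 2 * d)) = n / (r ^ 2 * d) := by
          field_simp
        rw [this, Real.sqrt_div hn0.le, Real.sqrt_mul (by positivity), Real.sqrt_sq hr0.le]
        field_simp
      rw [hg]
      have hK := K_bound m hm
      have h1d : 1 / √ d ≤ 1 + 6 * ρ := by
        rw [div_le_iff₀ hsd]
        have : s ≤ √ d := by
          apply Real.le_sqrt_of_sq_le; linarith
        nlinarith
      have hlog : 1 / n ≤ Real.log n ^ 2 / n := by
        gcongr
        have : 1 ≤ Real.log n := by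
          rw [Real.le_log_iff_exp_le hn0]
          linarith [Real.exp_one_lt_d9]
        nlinarith
      have hG : 0 ≤ gphi (1 / √ d * t * √ n / r) := (Real.exp_pos _).le
      have hfin : Real.exp (9 / (4 * (m - 2 : ℝ))) * (1 / √ d) ≤
          1 + 567 * (ρ + Real.log n ^ 2 / n + a) := by
        calc _ ≤ (1 + 189 / n) * (1 + 6 * ρ) := by gcongr
          _ ≤ _ := by
            have h189 : 189 / n = 189 * (1 / n) := by ring
            rw [h189]
            have : 0 < 1 / n := by positivity
            nlinarith
      calc _ = Real.exp (9 / (4 * (m - 2 : ℝ))) * (√ (n / (2 * Real.pi)) * √ (2 * Real.pi / (n + (r * s) ^ 2))) * gphi (1 / √ d * t * √ n / r) := by ring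
        _ = Real.exp (9 / (4 * (m - 2 : ℝ))) * (1 / √ d) * (√ n / r) * gphi (1 / √ d * t * √ n / r) := by rw [hsq]; ring
        _ ≤ _ := mul_le_mul_of_nonneg_right
          (mul_le_mul_of_nonneg_right hfin (by positivity)) hG
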